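/- For every k ∈ ℕ and every τ ∈ Λ^{aug+}_{(k)}, the trace value tr(bbm_{±1}(τ)) is a linear combination, with coefficients rational functions in q and z, of monomials s_1^{u_1} s_2^{u_2} ⋯ s_v^{u_v} with u_i ∈ ℕ and Σ_{i=1}^v i·u_i = k + p. Hence each equation obtained by performing braid band moves on elements of Λ^{aug+}_{(k)} involves only monomial unknowns of weighted degrees k and k+p, so the infinite system of equations obtained from all of Λ^{aug+} splits into self-contained subsystems indexed by the level k. -/

import Mathlib

/-!
The word `t^p t_1^{k_0} ⋯ t_{n+1}^{k_n} g_1^{±1}` contains `t` exactly `k + p` times and never `t⁻¹`.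
The trace of any word in `t` and the `g_i` with `d` occurrences of `t` is a combination of monomials in
the `s_i` of weighted degree `d`, with coefficients in the field generated by `q` and `z`.

To keep track of the degree, `t` is replaced by `t X` in the polynomial ring `A[X]` and the trace is
extended coefficientwise. The claim becomes ungraded: if `K` is the field
generated by `q` and `z`, and `P_n` the `K`-algebra generated by `t X` and `g_1, …, g_{n-1}`, then the
trace maps `P_n` into the `K`-algebra of polynomials whose coefficient of `X^d` has weighted degree `d`
(`weightedSubalgebra`). The parameters of the new trace are `s_k X^k`, which lie in this algebra.

The abstract statement (`LoopHecke.trace_mem`) is proved by induction on `n`. Let `N_{n,k}` be the span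
of `P_n t_n^j`, `j < k`, and `P_n g_n P_n`. Because `t_n` commutes with `P_n`, each `N_{n,k}` is a
`P_n`-bimodule, and the relation `t_n g_n = (q-1) t_n + q g_n t_{n-1}` shows that
* `g_n t_{n-1}^j g_n` is a nonzero scalar times `t_n^j` modulo `N_{n,j}` (`g_tt_pow_g`),
* the `N_{n,k}` exhaust `P_{n+1}` (`P_succ_exhaust`),
* `t'_n^k` is a nonzero scalar times `t_n^k` modulo `N_{n,k}` (`tp_pow_sub`).

On `P_n g_n P_n` the trace reduces to `P_n` by cyclicity and the rule for `g_n`; on `P_n t_n^k` it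
reduces to `s_k` times the trace on `P_n` and to smaller `k`, by the triangularity above.
-/

/-- Integer power of an element `x` with chosen two-sided inverse `xinv`. -/
noncomputable def zp {A : Type*} [Monoid A] (x xinv : A) (m : ℤ) : A :=
  if 0 ≤ m then x ^ m.toNat else xinv ^ (-m).toNat

/-- The subalgebra of the (inductive limit of the) generalized Iwahori–Hecke algebras of
type B corresponding to `H_{1,n}(q)`: it is generated by `t, t⁻¹` (when `n ≥ 1`) and the
braiding generators `g_i, g_i⁻¹` for `1 ≤ i < n`. -/
def Hsub (F : Type*) {A : Type*} [Field F] [Ring A] [Algebra F A]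
    (t tinv : A) (g ginv : ℕ → A) (n : ℕ) : Subalgebra F A :=
  Algebra.adjoin F
    {x | (1 ≤ n ∧ (x = t ∨ x = tinv)) ∨ ∃ i, 1 ≤ i ∧ i < n ∧ (x = g i ∨ x = ginv i)}

/-! ### Relations and looping elements -/

/-- The relations of the generalized Hecke algebra of type `B` that involve only non-negative powers
of the loop generator `t`, over a base field `K` containing `q`. -/
structure LoopHecke (K A : Type*) [Field K] [Ring A] [Algebra K A] where
  q : K
  hq : q ≠ 0
  t : A
  g : ℕ → A
  hbt : g 1 * t * g 1 * t = t * g 1 * t * g 1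
  hct : ∀ i, 2 ≤ i → t * g i = g i * t
  hbr : ∀ i, 1 ≤ i → g i * g (i+1) * g i = g (i+1) * g i * g (i+1)
  hcm : ∀ i j, 1 ≤ i → i + 2 ≤ j → g i * g j = g j * g i
  hq2 : ∀ i, 1 ≤ i → g i * g i = (q - 1) • g i + q • (1 : A)

namespace LoopHecke

variable {K A : Type*} [Field K] [Ring A] [Algebra K A] (D : LoopHecke K A)

/-- The looping element `t_n = g_n ⋯ g_1 t g_1 ⋯ g_n`. -/
def tt : ℕ → A
  | 0 => D.t
  | n + 1 => D.g (n+1) * tt n * D.g (n+1)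

/-- The looping element `t'_n = g_n ⋯ g_1 t g_1⁻¹ ⋯ g_n⁻¹`, with `g_i⁻¹` expanded as
`q⁻¹ g_i + (q⁻¹ - 1)` by the quadratic relation. -/
def tp : ℕ → A
  | 0 => D.t
  | n + 1 => D.g (n+1) * tp n * (D.q⁻¹ • D.g (n+1) + (D.q⁻¹ - 1) • (1 : A))

/-- The subalgebra generated by `t` (if `n ≥ 1`) and `g_1, …, g_{n-1}`: the part of `H_{1,n}(q)` with
no negative powers of `t`. -/
def P (n : ℕ) : Subalgebra K A :=
  Algebra.adjoin K {x | (1 ≤ n ∧ x = D.t) ∨ ∃ i, 1 ≤ i ∧ i < n ∧ x = D.g i}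

/-- The `K`-span of `P_n t_n^j` for `j < k` together with `P_n g_n P_n`. The second part is absent
for `n = 0`, since `g_0` is not one of the braiding generators. -/
def N (n k : ℕ) : Submodule K A :=
  Submodule.span K {x | (∃ a ∈ D.P n, ∃ j < k, x = a * D.tt n ^ j) ∨
    (1 ≤ n ∧ ∃ a ∈ D.P n, ∃ b ∈ D.P n, x = a * D.g n * b)}

/-! ### The subalgebras `P_n` and commutation -/

lemma P_mono {m n : ℕ} (h : m ≤ n) : D.P m ≤ D.P n := by
  apply Algebra.adjoin_mono
  rintro x (⟨h1, rfl⟩ | ⟨i, h1, h2, rfl⟩)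
  · exact Or.inl ⟨by omega, rfl⟩
  · exact Or.inr ⟨i, h1, by omega, rfl⟩

lemma t_mem {n : ℕ} (h : 1 ≤ n) : D.t ∈ D.P n := Algebra.subset_adjoin (Or.inl ⟨h, rfl⟩)

lemma g_mem {n i : ℕ} (h : 1 ≤ i) (h' : i < n) : D.g i ∈ D.P n :=
  Algebra.subset_adjoin (Or.inr ⟨i, h, h', rfl⟩)

lemma P_commute {n : ℕ} {y : A} (ht : 1 ≤ n → Commute y D.t)
    (hg : ∀ i, 1 ≤ i → i < n → Commute y (D.g i)) {a : A} (ha : a ∈ D.P n) : Commute y a := by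
  have : D.P n ≤ Subalgebra.centralizer K {y} := by
    refine Algebra.adjoin_le ?_
    rintro x (⟨h1, rfl⟩ | ⟨i, h1, h2, rfl⟩)
    · simpa [Set.mem_centralizer_iff] using (ht h1).eq
    · simpa [Set.mem_centralizer_iff] using (hg i h1 h2).eq
  exact (Subalgebra.mem_centralizer_iff K).1 (this ha) y rfl

lemma g_commute {n m : ℕ} (h : n < m) {a : A} (ha : a ∈ D.P n) : Commute (D.g m) a := by
  refine D.P_commute (fun h1 => (D.hct m (by omega)).symm) (fun i h1 h2 => ?_) ha
  exact (D.hcm i m h1 (by omega)).symm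

lemma tt_mem (n : ℕ) : D.tt n ∈ D.P (n+1) := by
  induction n with
  | zero => exact D.t_mem le_rfl
  | succ n ih =>
    have hg := D.g_mem (n := n+1+1) (i := n+1) (by omega) (by omega)
    exact mul_mem (mul_mem hg (D.P_mono (by omega) ih)) hg

lemma tp_mem (n : ℕ) : D.tp n ∈ D.P (n+1) := by
  induction n with
  | zero => exact D.t_mem le_rfl
  | succ n ih =>
    have hg := D.g_mem (n := n+1+1) (i := n+1) (by omega) (by omega)
    exact mul_mem (mul_mem hg (D.P_mono (by omega) ih))
      (add_mem (Subalgebra.smul_mem _ hg _) (Subalgebra.smul_mem _ (one_mem _) _))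

lemma tt_commute_t (n : ℕ) : Commute (D.tt n) D.t := by
  induction n with
  | zero => exact Commute.refl _
  | succ n ih =>
    rcases n with _ | n
    · change D.g 1 * D.t * D.g 1 * D.t = D.t * (D.g 1 * D.t * D.g 1)
      rw [D.hbt]; simp only [mul_assoc]
    · have h : Commute (D.g (n+1+1)) D.t := (D.hct (n+1+1) (by omega)).symm
      exact (h.mul_left ih).mul_left h

lemma tt_commute_g (n : ℕ) : ∀ i, 1 ≤ i → i < n → Commute (D.tt n) (D.g i) := by
  induction n with
  | zero => intro i _ h; omega
  | succ n ih =>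
    intro i h1 h2
    rcases Nat.lt_or_ge i n with h | h
    · have hc : Commute (D.g (n+1)) (D.g i) := (D.hcm i (n+1) h1 (by omega)).symm
      exact (hc.mul_left (ih i h1 h)).mul_left hc
    · obtain ⟨m, rfl⟩ : ∃ m, n = m + 1 := ⟨n - 1, by omega⟩
      obtain rfl : i = m + 1 := by omega
      have hb := D.hbr (m+1) (by omega)
      have hc : D.g (m+1+1) * D.tt m = D.tt m * D.g (m+1+1) :=
        D.g_commute (by omega) (D.tt_mem m)
      change D.g (m+1+1) * (D.g (m+1) * D.tt m * D.g (m+1)) * D.g (m+1+1) * D.g (m+1)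
        = D.g (m+1) * (D.g (m+1+1) * (D.g (m+1) * D.tt m * D.g (m+1)) * D.g (m+1+1))
      generalize D.g (m+1+1) = y at *
      generalize D.g (m+1) = x at *
      generalize D.tt m = w at *
      calc y * (x * w * x) * y * x = y * x * w * (x * y * x) := by simp only [mul_assoc]
        _ = y * x * (w * y) * x * y := by rw [hb]; simp only [mul_assoc]
        _ = (y * x * y) * w * x * y := by rw [← hc]; simp only [mul_assoc]
        _ = _ := by rw [← hb]; simp only [mul_assoc]

lemma tt_commute {n : ℕ} {a : A} (ha : a ∈ D.P n) : Commute (D.tt n) a :=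
  D.P_commute (fun _ => D.tt_commute_t n) (D.tt_commute_g n) ha

/-! ### The filtration `N_{n,k}` -/

lemma mem_N_tt {n k j : ℕ} {a : A} (ha : a ∈ D.P n) (h : j < k) : a * D.tt n ^ j ∈ D.N n k :=
  Submodule.subset_span (Or.inl ⟨a, ha, j, h, rfl⟩)

lemma mem_N_g {n k : ℕ} {a b : A} (h : 1 ≤ n) (ha : a ∈ D.P n) (hb : b ∈ D.P n) :
    a * D.g n * b ∈ D.N n k :=
  Submodule.subset_span (Or.inr ⟨h, a, ha, b, hb, rfl⟩)

lemma N_map {V : Type*} [AddCommGroup V] [Module K V] {n k : ℕ} (f : A →ₗ[K] V)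
    (T : Submodule K V) (h1 : ∀ a ∈ D.P n, ∀ j < k, f (a * D.tt n ^ j) ∈ T)
    (h2 : 1 ≤ n → ∀ a ∈ D.P n, ∀ b ∈ D.P n, f (a * D.g n * b) ∈ T) {x : A} (hx : x ∈ D.N n k) :
    f x ∈ T := by
  have : D.N n k ≤ T.comap f := by
    refine Submodule.span_le.2 ?_
    rintro y (⟨a, ha, j, hj, rfl⟩ | ⟨hn, a, ha, b, hb, rfl⟩)
    · exact h1 a ha j hj
    · exact h2 hn a ha b hb
  exact this hx

lemma N_mono {n k l : ℕ} (h : k ≤ l) : D.N n k ≤ D.N n l := fun _ hx =>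
  D.N_map LinearMap.id (D.N n l) (fun _ ha _ hj => D.mem_N_tt ha (by omega))
    (fun hn _ ha _ hb => D.mem_N_g hn ha hb) hx

lemma mul_mem_N {n k : ℕ} {a x : A} (ha : a ∈ D.P n) (hx : x ∈ D.N n k) : a * x ∈ D.N n k := by
  refine D.N_map (LinearMap.mulLeft K a) (D.N n k) (fun b hb j hj => ?_)
    (fun hn b hb c hc => ?_) hx
  · rw [LinearMap.mulLeft_apply, ← mul_assoc]
    exact D.mem_N_tt (mul_mem ha hb) hj
  · rw [LinearMap.mulLeft_apply, mul_assoc b, ← mul_assoc, ← mul_assoc]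
    exact D.mem_N_g hn (mul_mem ha hb) hc

lemma N_mul_mem {n k : ℕ} {a x : A} (ha : a ∈ D.P n) (hx : x ∈ D.N n k) : x * a ∈ D.N n k := by
  refine D.N_map (LinearMap.mulRight K a) (D.N n k) (fun b hb j hj => ?_)
    (fun hn b hb c hc => ?_) hx
  · rw [LinearMap.mulRight_apply, mul_assoc, ((D.tt_commute ha).pow_left j).eq, ← mul_assoc]
    exact D.mem_N_tt (mul_mem hb ha) hj
  · rw [LinearMap.mulRight_apply, mul_assoc]
    exact D.mem_N_g hn hb (mul_mem hc ha)

lemma tt_mul_g (n : ℕ) : D.tt (n+1) * D.g (n+1) =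
    (D.q - 1) • D.tt (n+1) + D.q • (D.g (n+1) * D.tt n) := by
  change D.g (n+1) * D.tt n * D.g (n+1) * D.g (n+1) =
    (D.q - 1) • (D.g (n+1) * D.tt n * D.g (n+1)) + D.q • (D.g (n+1) * D.tt n)
  rw [mul_assoc, D.hq2 (n+1) (by omega), mul_add, mul_smul_comm, mul_smul_comm, mul_one]

lemma tt_pow_mul_g (n k : ℕ) : D.tt (n+1) ^ k * D.g (n+1) ∈ D.N (n+1) (k+1) := by
  induction k with
  | zero =>
    simpa using D.mem_N_g (n := n+1) (k := 1) (by omega) (one_mem _) (one_mem _)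
  | succ k ih =>
    rw [pow_succ, mul_assoc, tt_mul_g, mul_add, mul_smul_comm, mul_smul_comm, ← pow_succ,
      ← mul_assoc]
    refine add_mem (Submodule.smul_mem _ _ ?_) (Submodule.smul_mem _ _ ?_)
    · simpa using D.mem_N_tt (n := n+1) (one_mem _) (show k + 1 < k + 1 + 1 by omega)
    · exact D.N_mono (by omega) (D.N_mul_mem (D.tt_mem n) ih)

lemma tt_mul_N (n k : ℕ) {x : A} (hx : x ∈ D.N (n+1) (k+1)) :
    D.tt (n+1) * x ∈ D.N (n+1) (k+2) := by
  refine D.N_map (LinearMap.mulLeft K (D.tt (n+1))) (D.N (n+1) (k+2)) (fun b hb j hj => ?_)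
    (fun hn b hb c hc => ?_) hx
  · rw [LinearMap.mulLeft_apply, ← mul_assoc, (D.tt_commute hb).eq, mul_assoc, ← pow_succ']
    exact D.mem_N_tt hb (by omega)
  · rw [LinearMap.mulLeft_apply, ← mul_assoc, ← mul_assoc, (D.tt_commute hb).eq, mul_assoc b]
    refine D.N_mul_mem hc (D.mul_mem_N hb (D.N_mono (show 2 ≤ k + 2 by omega) ?_))
    simpa using D.tt_pow_mul_g n 1

/-- The leading term of `g_n t_{n-1}^j g_n` is `q^{1-j} t_n^j`. -/
lemma g_tt_pow_g (n j : ℕ) : ∃ u : K, u ≠ 0 ∧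
    D.g (n+1) * D.tt n ^ j * D.g (n+1) - u • D.tt (n+1) ^ j ∈ D.N (n+1) j := by
  have hgN : ∀ k, D.g (n+1) ∈ D.N (n+1) k := fun k => by
    simpa using D.mem_N_g (n := n+1) (k := k) (by omega) (one_mem _) (one_mem _)
  rcases j with _ | j
  · refine ⟨D.q, D.hq, ?_⟩
    simpa [D.hq2 (n+1) (by omega)] using Submodule.smul_mem _ (D.q - 1) (hgN 0)
  induction j with
  | zero => exact ⟨1, one_ne_zero, by simp [tt]⟩
  | succ j ih =>
    obtain ⟨u, hu, h⟩ := ih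
    refine ⟨D.q⁻¹ * u, mul_ne_zero (inv_ne_zero D.hq) hu, ?_⟩
    have hc : D.tt (n+1) * D.tt n ^ (j+1) = D.tt n ^ (j+1) * D.tt (n+1) :=
      (D.tt_commute (pow_mem (D.tt_mem n) _)).eq
    -- `q g t_{n-1} = t_n g - (q-1) t_n` lets one factor `t_n` out on the left.
    have h1 : D.q • (D.g (n+1) * D.tt n) =
        D.tt (n+1) * D.g (n+1) - (D.q - 1) • D.tt (n+1) := by
      rw [tt_mul_g]; abel
    have h2 : D.g (n+1) * D.tt n ^ (j+1+1) * D.g (n+1) = D.q⁻¹ •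
        (D.tt (n+1) * (D.g (n+1) * D.tt n ^ (j+1) * D.g (n+1))
          - (D.q - 1) • (D.tt n ^ (j+1) * (D.tt (n+1) * D.g (n+1)))) := by
      rw [eq_inv_smul_iff₀ D.hq, pow_succ' _ (j+1), ← mul_assoc, ← smul_mul_assoc,
        ← smul_mul_assoc, h1, ← mul_assoc (D.tt n ^ (j+1)), ← hc]
      simp only [sub_mul, smul_mul_assoc, mul_assoc]
    have h3 : D.g (n+1) * D.tt n ^ (j+1+1) * D.g (n+1) - (D.q⁻¹ * u) • D.tt (n+1) ^ (j+1+1) =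
        D.q⁻¹ • (D.tt (n+1) * (D.g (n+1) * D.tt n ^ (j+1) * D.g (n+1) - u • D.tt (n+1) ^ (j+1))
          - (D.q - 1) • (D.tt n ^ (j+1) * (D.tt (n+1) * D.g (n+1)))) := by
      rw [h2, mul_smul, ← smul_sub, mul_sub, mul_smul_comm, ← pow_succ']
      congr 1; abel
    rw [h3]
    refine Submodule.smul_mem _ _ (sub_mem (D.tt_mul_N n j h) (Submodule.smul_mem _ _ ?_))
    refine D.mul_mem_N (pow_mem (D.tt_mem n) _) (D.N_mono (show 2 ≤ j + 1 + 1 by omega) ?_)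
    simpa using D.tt_pow_mul_g n 1

lemma g_mul_N_mul_g (n k : ℕ) {x : A} (hx : x ∈ D.N n k) :
    D.g (n+1) * x * D.g (n+1) ∈ D.N (n+1) k := by
  refine D.N_map (LinearMap.mulRight K (D.g (n+1)) ∘ₗ LinearMap.mulLeft K (D.g (n+1)))
    (D.N (n+1) k) (fun a ha j hj => ?_) (fun hn a ha b hb => ?_) hx
  · obtain ⟨u, -, h⟩ := D.g_tt_pow_g n j
    have h' : D.g (n+1) * D.tt n ^ j * D.g (n+1) ∈ D.N (n+1) k := by
      have h2 := D.mem_N_tt (n := n+1) (one_mem _) hj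
      rw [one_mul] at h2
      have := add_mem (D.N_mono hj.le h) (Submodule.smul_mem _ u h2)
      rwa [sub_add_cancel] at this
    have := D.mul_mem_N (D.P_mono (Nat.le_succ n) ha) h'
    simp only [LinearMap.comp_apply, LinearMap.mulLeft_apply, LinearMap.mulRight_apply]
    rw [← mul_assoc, (D.g_commute (Nat.lt_succ_self n) ha).eq]
    simpa only [mul_assoc] using this
  · have h1 := D.g_commute (Nat.lt_succ_self n) ha
    have h2 := D.g_commute (Nat.lt_succ_self n) hb
    have hP := D.P_mono (Nat.le_succ n)
    have hgn := D.g_mem hn (Nat.lt_succ_self n)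
    have := D.mem_N_g (k := k) (Nat.succ_pos n) (mul_mem (hP ha) hgn) (mul_mem hgn (hP hb))
    convert this using 1
    simp only [LinearMap.comp_apply, LinearMap.mulLeft_apply, LinearMap.mulRight_apply]
    calc D.g (n+1) * (a * D.g n * b) * D.g (n+1)
        = (D.g (n+1) * a) * D.g n * (b * D.g (n+1)) := by simp only [mul_assoc]
      _ = a * (D.g (n+1) * D.g n * D.g (n+1)) * b := by
        rw [h1.eq, ← h2.eq]; simp only [mul_assoc]
      _ = _ := by rw [← D.hbr n hn]; simp only [mul_assoc]

lemma exhaust_of_gen (n : ℕ)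
    (hgen : ∀ x, (x = D.t ∨ ∃ i, 1 ≤ i ∧ i < n + 1 ∧ x = D.g i) →
      ∀ y k, y ∈ D.N n k → ∃ l, y * x ∈ D.N n l) :
    ∀ x ∈ D.P (n+1), ∃ k, x ∈ D.N n k := by
  suffices H : ∀ x ∈ D.P (n+1), ∀ y k, y ∈ D.N n k → ∃ l, y * x ∈ D.N n l by
    intro x hx
    simpa using H x hx 1 1 (by simpa using D.mem_N_tt (one_mem (D.P n)) (Nat.zero_lt_one))
  intro x hx
  induction hx using Algebra.adjoin_induction with
  | mem x hx => exact hgen x (hx.imp And.right id)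
  | algebraMap r => exact fun y k hy => ⟨k, D.N_mul_mem (Subalgebra.algebraMap_mem _ r) hy⟩
  | add a b _ _ iha ihb =>
    intro y k hy
    obtain ⟨l, hl⟩ := iha y k hy
    obtain ⟨m, hm⟩ := ihb y k hy
    refine ⟨max l m, ?_⟩
    rw [mul_add]
    exact add_mem (D.N_mono (le_max_left l m) hl) (D.N_mono (le_max_right l m) hm)
  | mul a b _ _ iha ihb =>
    intro y k hy
    obtain ⟨l, hl⟩ := iha y k hy
    obtain ⟨m, hm⟩ := ihb _ l hl
    exact ⟨m, by rwa [← mul_assoc]⟩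

/-- `P_{n+1}` is exhausted by the filtration: this is the spanning half of the inductive basis
theorem, in a form that uses the elements `t_n` (which commute with `P_n`). -/
lemma P_succ_exhaust (n : ℕ) : ∀ x ∈ D.P (n+1), ∃ k, x ∈ D.N n k := by
  induction n with
  | zero =>
    refine D.exhaust_of_gen 0 ?_
    rintro x (rfl | ⟨i, h1, h2, -⟩) y k hy
    · refine ⟨k+1, D.N_map (LinearMap.mulRight K D.t) (D.N 0 (k+1)) (fun a ha j hj => ?_)
        (fun h => absurd h (by omega)) hy⟩
      have := D.mem_N_tt ha (show j + 1 < k + 1 by omega)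
      rwa [pow_succ, ← mul_assoc] at this
    · omega
  | succ n ih =>
    refine D.exhaust_of_gen (n+1) ?_
    rintro x (rfl | ⟨i, h1, h2, rfl⟩) y k hy
    · exact ⟨k, D.N_mul_mem (D.t_mem (by omega)) hy⟩
    rcases Nat.lt_or_ge i (n+1) with h | h
    · exact ⟨k, D.N_mul_mem (D.g_mem h1 h) hy⟩
    obtain rfl : i = n + 1 := by omega
    -- The bound `l` depends on the element `b` in `a g b`, so the union of all `N n l` is used.
    have hdir : Directed (· ≤ ·) (D.N (n+1)) := (monotone_nat_of_le_succ fun m =>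
      D.N_mono (Nat.le_succ m)).directed_le
    have : y * D.g (n+1) ∈ ⨆ l, D.N (n+1) l := by
      refine D.N_map (LinearMap.mulRight K (D.g (n+1))) (⨆ l, D.N (n+1) l) (fun a ha j hj => ?_)
        (fun _ a ha b hb => ?_) hy
      · rw [LinearMap.mulRight_apply, mul_assoc]
        exact Submodule.mem_iSup_of_mem (j+1) (D.mul_mem_N ha (D.tt_pow_mul_g n j))
      · obtain ⟨l, hl⟩ := ih b hb
        rw [LinearMap.mulRight_apply, mul_assoc, mul_assoc, ← mul_assoc (D.g (n+1))]
        exact Submodule.mem_iSup_of_mem l (D.mul_mem_N ha (D.g_mul_N_mul_g n l hl))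
    exact (Submodule.mem_iSup_of_directed _ hdir).1 this

/-- The change of looping elements is triangular: `t'_n^k` is an invertible scalar times `t_n^k`, up
to strictly lower terms of the filtration. -/
lemma tp_pow_sub (n k : ℕ) : ∃ u : K, u ≠ 0 ∧ D.tp n ^ k - u • D.tt n ^ k ∈ D.N n k := by
  induction n with
  | zero => exact ⟨1, one_ne_zero, by simp [tp, tt]⟩
  | succ n ih =>
    obtain ⟨u, hu, h⟩ := ih
    obtain ⟨v, hv, h'⟩ := D.g_tt_pow_g n k
    refine ⟨D.q⁻¹ * u * v, by simp [hu, hv, D.hq], ?_⟩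
    have h0 : D.q⁻¹ * (D.q - 1) + (D.q⁻¹ - 1) = 0 := by
      rw [mul_sub, inv_mul_cancel₀ D.hq]; ring
    have hinv : (D.q⁻¹ • D.g (n+1) + (D.q⁻¹ - 1) • (1 : A)) * D.g (n+1) = 1 := by
      rw [add_mul, smul_mul_assoc, D.hq2 (n+1) (by omega), smul_add, smul_smul, smul_smul,
        inv_mul_cancel₀ D.hq, smul_mul_assoc, one_mul, one_smul, add_right_comm, ← add_smul, h0,
        zero_smul, zero_add]
    have hinv' : D.g (n+1) * (D.q⁻¹ • D.g (n+1) + (D.q⁻¹ - 1) • (1 : A)) = 1 := by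
      refine Eq.trans ?_ hinv
      simp only [mul_add, add_mul, mul_smul_comm, smul_mul_assoc, mul_one, one_mul]
    have hpow : ∀ k, D.tp (n+1) ^ k =
        D.g (n+1) * D.tp n ^ k * (D.q⁻¹ • D.g (n+1) + (D.q⁻¹ - 1) • (1 : A)) := by
      intro k
      induction k with
      | zero => rw [pow_zero, pow_zero, mul_one, hinv']
      | succ k ih' =>
        rw [pow_succ, ih']
        change _ * (D.g (n+1) * D.tp n * (D.q⁻¹ • D.g (n+1) + (D.q⁻¹ - 1) • (1 : A))) = _
        generalize D.q⁻¹ • D.g (n+1) + (D.q⁻¹ - 1) • (1 : A) = y at *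
        rw [mul_assoc _ y, ← mul_assoc y, ← mul_assoc y, hinv, one_mul, pow_succ]
        simp only [mul_assoc]
    have key : D.tp (n+1) ^ k - (D.q⁻¹ * u * v) • D.tt (n+1) ^ k =
        D.q⁻¹ • (D.g (n+1) * (D.tp n ^ k - u • D.tt n ^ k) * D.g (n+1) +
          u • (D.g (n+1) * D.tt n ^ k * D.g (n+1) - v • D.tt (n+1) ^ k)) +
        (D.q⁻¹ - 1) • (1 * D.g (n+1) * D.tp n ^ k) := by
      rw [hpow]
      simp only [mul_add, mul_sub, sub_mul, smul_add, smul_sub, mul_smul_comm, smul_mul_assoc,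
        mul_one, one_mul, mul_smul]
      abel
    rw [key]
    exact add_mem (Submodule.smul_mem _ _ (add_mem (D.g_mul_N_mul_g n k h)
      (Submodule.smul_mem _ _ h'))) (Submodule.smul_mem _ _
        (D.mem_N_g (by omega) (one_mem _) (pow_mem (D.tp_mem n) k)))

/-! ### Values of the trace -/

/-- A trace obeying the two Markov-type rules maps every `P_n` into a given subalgebra `S`, as soon
as `S` contains all the parameters `s_k`, `k ≥ 0`. -/
lemma trace_mem {R : Type*} [CommRing R] [Algebra K R] (S : Subalgebra K R) (tr : A →ₗ[K] R)
    (z : K) (s : ℕ → R) (hs : ∀ k, s k ∈ S) (htr1 : tr 1 = 1)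
    (htrc : ∀ a b, tr (a * b) = tr (b * a))
    (htrg : ∀ n, 1 ≤ n → ∀ a ∈ D.P n, tr (a * D.g n) = z • tr a)
    (htrs : ∀ n k, ∀ a ∈ D.P n, tr (a * D.tp n ^ k) = s k * tr a) (n : ℕ) :
    ∀ x ∈ D.P n, tr x ∈ S := by
  induction n with
  | zero =>
    intro x hx
    have : D.P 0 ≤ ⊥ := by
      refine Algebra.adjoin_le ?_
      rintro x (⟨h1, -⟩ | ⟨i, h1, h2, -⟩) <;> omega
    obtain ⟨r, rfl⟩ := Algebra.mem_bot.1 (this hx)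
    rw [Algebra.algebraMap_eq_smul_one, map_smul, htr1]
    exact Subalgebra.smul_mem _ (one_mem _) _
  | succ n ih =>
    have hg : 1 ≤ n → ∀ a ∈ D.P n, ∀ b ∈ D.P n, tr (a * D.g n * b) ∈ Subalgebra.toSubmodule S := by
      intro hn a ha b hb
      rw [htrc, ← mul_assoc, htrg n hn _ (mul_mem hb ha)]
      exact Subalgebra.smul_mem _ (ih _ (mul_mem hb ha)) _
    have ht : ∀ k, ∀ a ∈ D.P n, tr (a * D.tt n ^ k) ∈ Subalgebra.toSubmodule S := by
      intro k
      induction k using Nat.strong_induction_on with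
      | _ k ihk =>
        intro a ha
        obtain ⟨u, hu, h⟩ := D.tp_pow_sub n k
        have h1 := D.N_map tr (Subalgebra.toSubmodule S) (fun b hb j hj => ihk j hj b hb) hg
          (D.mul_mem_N ha h)
        rw [mul_sub, map_sub, htrs n k a ha, mul_smul_comm, map_smul] at h1
        have h2 : s k * tr a ∈ Subalgebra.toSubmodule S := S.mul_mem (hs k) (ih a ha)
        have h3 := Submodule.smul_mem _ u⁻¹ (sub_mem h2 h1)
        rwa [sub_sub_cancel, inv_smul_smul₀ hu] at h3
    intro x hx
    obtain ⟨k, hk⟩ := D.P_succ_exhaust n x hx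
    exact D.N_map tr (Subalgebra.toSubmodule S) (fun b hb j _ => ht j b hb) hg hk

end LoopHecke

/-! ### Weighted homogeneity -/

/-- The span over the subfield `K` of the monomials `s_1^{u_1} ⋯ s_v^{u_v}` of weighted degree `d`. -/
def weightSpan {F : Type*} [Field F] (K : Subfield F) (s : ℤ → F) (d : ℕ) : Submodule K F :=
  Submodule.span K {m | ∃ (v : ℕ) (u : ℕ → ℕ), ∑ i ∈ Finset.Icc 1 v, i * u i = d ∧
    m = ∏ i ∈ Finset.Icc 1 v, s (i : ℤ) ^ u i}

lemma one_mem_weightSpan {F : Type*} [Field F] (K : Subfield F) (s : ℤ → F) :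
    (1 : F) ∈ weightSpan K s 0 :=
  Submodule.subset_span ⟨0, 0, by simp, by simp⟩

lemma s_mem_weightSpan {F : Type*} [Field F] (K : Subfield F) (s : ℤ → F) (hs : s 0 = 1) (k : ℕ) :
    s k ∈ weightSpan K s k := by
  rcases k with _ | k
  · simpa [hs] using one_mem_weightSpan K s
  · refine Submodule.subset_span ⟨k+1, fun i => if i = k + 1 then 1 else 0, ?_, ?_⟩
    · simp
    · rw [Finset.prod_eq_single (k+1)]
      · simp
      · intro b _ hb; simp [hb]
      · intro h; simp at h

lemma mul_mem_weightSpan {F : Type*} [Field F] (K : Subfield F) (s : ℤ → F) {d e : ℕ} {x y : F}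
    (hx : x ∈ weightSpan K s d) (hy : y ∈ weightSpan K s e) : x * y ∈ weightSpan K s (d + e) := by
  have h := Submodule.mul_mem_mul hx hy
  rw [weightSpan, weightSpan, Submodule.span_mul_span] at h
  refine Submodule.span_mono ?_ h
  rintro _ ⟨_, ⟨v, u, rfl, rfl⟩, _, ⟨v', u', rfl, rfl⟩, rfl⟩
  refine ⟨max v v', fun i => (if i ∈ Finset.Icc 1 v then u i else 0) +
    (if i ∈ Finset.Icc 1 v' then u' i else 0), ?_, ?_⟩
  · have h1 : Finset.Icc 1 (max v v') ∩ Finset.Icc 1 v = Finset.Icc 1 v :=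
      Finset.inter_eq_right.2 (Finset.Icc_subset_Icc_right (le_max_left _ _))
    have h2 : Finset.Icc 1 (max v v') ∩ Finset.Icc 1 v' = Finset.Icc 1 v' :=
      Finset.inter_eq_right.2 (Finset.Icc_subset_Icc_right (le_max_right _ _))
    simp only [mul_add, mul_ite, mul_zero, Finset.sum_add_distrib, Finset.sum_ite_mem, h1, h2]
  · have h1 : Finset.Icc 1 (max v v') ∩ Finset.Icc 1 v = Finset.Icc 1 v :=
      Finset.inter_eq_right.2 (Finset.Icc_subset_Icc_right (le_max_left _ _))
    have h2 : Finset.Icc 1 (max v v') ∩ Finset.Icc 1 v' = Finset.Icc 1 v' :=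
      Finset.inter_eq_right.2 (Finset.Icc_subset_Icc_right (le_max_right _ _))
    simp only [pow_add, pow_ite, pow_zero, Finset.prod_mul_distrib, Finset.prod_ite_mem, h1, h2]

open Polynomial in
/-- Polynomials whose coefficient of `X ^ d` is a combination of monomials of weighted degree `d`,
for every `d`. -/
def weightedSubalgebra {F : Type*} [Field F] (K : Subfield F) (s : ℤ → F) :
    Subalgebra K F[X] where
  carrier := {f | ∀ d, f.coeff d ∈ weightSpan K s d}
  mul_mem' := by
    intro f f' hf hf' d
    rw [coeff_mul]
    refine sum_mem fun x hx => ?_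
    rw [← Finset.HasAntidiagonal.mem_antidiagonal.1 hx]
    exact mul_mem_weightSpan K s (hf _) (hf' _)
  add_mem' := by
    intro f f' hf hf' d
    rw [coeff_add]
    exact add_mem (hf d) (hf' d)
  algebraMap_mem' := by
    intro r d
    rw [Algebra.algebraMap_eq_smul_one, coeff_smul, coeff_one]
    refine Submodule.smul_mem _ _ ?_
    split_ifs with h
    · subst h; exact one_mem_weightSpan K s
    · exact zero_mem _

open Polynomial in
/-- The coefficientwise extension of a linear form to polynomials. -/
noncomputable def traceX {F A : Type*} [Field F] [Ring A] [Algebra F A] (tr : A →ₗ[F] F) :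
    A[X] →ₗ[F] F[X] :=
  Polynomial.lsum fun n => (monomial n : F →ₗ[F] F[X]) ∘ₗ tr

open Polynomial in
lemma coeff_traceX {F A : Type*} [Field F] [Ring A] [Algebra F A] (tr : A →ₗ[F] F) (f : A[X])
    (d : ℕ) : (traceX tr f).coeff d = tr (f.coeff d) := by
  induction f using Polynomial.induction_on' with
  | add f f' h h' => simp [h, h']
  | monomial n a =>
    simp only [traceX, lsum_apply]
    rw [sum_monomial_index _ _ (by simp)]
    simp only [LinearMap.comp_apply, coeff_monomial]
    split_ifs <;> simp

open Polynomial in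
/-- For every `k ∈ ℕ` and every `τ ∈ Λᵃᵘᵍ⁺_{(k)}`, the trace `tr(bbm_{±1}(τ))`
is a linear combination, with coefficients rational functions in `q` and `z`, of
monomials `s_1^{u_1} ⋯ s_v^{u_v}` of weighted degree `∑ i·u_i = k + p`; hence the
infinite system splits into self-contained subsystems indexed by the level `k`. -/
theorem homflypt_stmt17
    {F : Type*} [Field F] {A : Type*} [Ring A] [Algebra F A]
    (q z : F) (hq0 : q ≠ 0) (hz0 : z ≠ 0)
    (t tinv : A) (g ginv : ℕ → A)
    (ht : t * tinv = 1) (ht' : tinv * t = 1)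
    (hg : ∀ i, g i * ginv i = 1) (hg' : ∀ i, ginv i * g i = 1)
    (hbt : g 1 * t * g 1 * t = t * g 1 * t * g 1)
    (hct : ∀ i, 2 ≤ i → t * g i = g i * t)
    (hbr : ∀ i, 1 ≤ i → g i * g (i+1) * g i = g (i+1) * g i * g (i+1))
    (hcm : ∀ i j, 1 ≤ i → i + 2 ≤ j → g i * g j = g j * g i)
    (hq2 : ∀ i, 1 ≤ i → g i * g i = (q - 1) • g i + q • (1 : A))
    (tt ttinv tp tpinv : ℕ → A)
    (htt0 : tt 0 = t) (htts : ∀ i, tt (i+1) = g (i+1) * tt i * g (i+1))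
    (htti0 : ttinv 0 = tinv)
    (httis : ∀ i, ttinv (i+1) = ginv (i+1) * ttinv i * ginv (i+1))
    (htp0 : tp 0 = t) (htps : ∀ i, tp (i+1) = g (i+1) * tp i * ginv (i+1))
    (htpi0 : tpinv 0 = tinv)
    (htpis : ∀ i, tpinv (i+1) = g (i+1) * tpinv i * ginv (i+1))
    (s : ℤ → F) (tr : A →ₗ[F] F)
    (htr1 : tr 1 = 1)
    (htrc : ∀ a b : A, tr (a * b) = tr (b * a))
    (htrg : ∀ (n : ℕ) (a : A), 1 ≤ n → a ∈ Hsub F t tinv g ginv n →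
      tr (a * g n) = z * tr a)
    (htrs : ∀ (n : ℕ) (a : A) (k : ℤ), a ∈ Hsub F t tinv g ginv n →
      tr (a * zp (tp n) (tpinv n) k) = s k * tr a)
    (p : ℕ)
    (k : ℕ) (n : ℕ) (kexp : ℕ → ℕ) (hpos : ∀ i ≤ n, 1 ≤ kexp i)
    (hsum : ∑ i ∈ Finset.range (n+1), kexp i = k) :
    (∃ (m : ℕ) (c : Fin m → F) (v : Fin m → ℕ) (u : Fin m → ℕ → ℕ),
      (∀ j, c j ∈ Subfield.closure {q, z})
        ∧ (∀ j, ∑ i ∈ Finset.Icc 1 (v j), i * u j i = k + p)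
        ∧ tr (t ^ p * (List.ofFn fun i : Fin (n+1) => tt (i.1+1) ^ kexp i.1).prod * g 1)
            = ∑ j, c j * ∏ i ∈ Finset.Icc 1 (v j), s (i : ℤ) ^ u j i)
      ∧ (∃ (m : ℕ) (c : Fin m → F) (v : Fin m → ℕ) (u : Fin m → ℕ → ℕ),
      (∀ j, c j ∈ Subfield.closure {q, z})
        ∧ (∀ j, ∑ i ∈ Finset.Icc 1 (v j), i * u j i = k + p)
        ∧ tr (t ^ p * (List.ofFn fun i : Fin (n+1) => tt (i.1+1) ^ kexp i.1).prod * ginv 1)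
            = ∑ j, c j * ∏ i ∈ Finset.Icc 1 (v j), s (i : ℤ) ^ u j i) := by
  set K : Subfield F := Subfield.closure {q, z} with hK
  have hqK : q ∈ K := Subfield.subset_closure (by simp)
  have hzK : z ∈ K := Subfield.subset_closure (by simp)
  have hXC : ∀ a : A, (X : A[X]) * C a = C a * X := fun a => X_mul_C a
  -- Marking `t` by the variable `X` turns the number of occurrences of `t` into a degree.
  let D : LoopHecke K A[X] :=
    { q := ⟨q, hqK⟩
      hq := fun h => hq0 (congrArg Subtype.val h)
      t := C t * X
      g := fun i => C (g i)
      hbt := by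
        rw [C_mul_X_eq_monomial]
        simp only [← monomial_zero_left, monomial_mul_monomial, hbt]
      hct := fun i hi => by
        rw [mul_assoc, hXC, ← mul_assoc, ← mul_assoc, ← C_mul, ← C_mul, hct i hi]
      hbr := fun i hi => by simp only [← C_mul, hbr i hi]
      hcm := fun i j hi hj => by simp only [← C_mul, hcm i j hi hj]
      hq2 := fun i hi => by
        rw [← C_mul, hq2 i hi, C_add, ← smul_C, ← smul_C, C_1]
        rfl }
  have hginv : ∀ i, 1 ≤ i → ginv i = q⁻¹ • g i + (q⁻¹ - 1) • (1 : A) := by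
    intro i hi
    have h := congrArg (fun a => q⁻¹ • (a * ginv i)) (hq2 i hi)
    simp only [add_mul, smul_mul_assoc, mul_assoc, hg, mul_one, one_mul, smul_add, smul_smul,
      inv_mul_cancel₀ hq0, one_smul, mul_sub] at h
    rw [h, add_right_comm, ← add_smul]
    simp
  have hDtt : ∀ i, D.tt i = C (tt i) * X := by
    intro i
    induction i with
    | zero => rw [htt0]; rfl
    | succ i ih =>
      change C (g (i+1)) * D.tt i * C (g (i+1)) = _
      rw [ih, htts, C_mul, C_mul, mul_assoc, mul_assoc (C (tt i)), hXC]
      simp only [mul_assoc]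
  have hDginv : ∀ i, 1 ≤ i → D.q⁻¹ • D.g i + (D.q⁻¹ - 1) • (1 : A[X]) = C (ginv i) := by
    intro i hi
    rw [hginv i hi, C_add, ← smul_C, ← smul_C, C_1]
    rfl
  have hDtp : ∀ i, D.tp i = C (tp i) * X := by
    intro i
    induction i with
    | zero => rw [htp0]; rfl
    | succ i ih =>
      change C (g (i+1)) * D.tp i * (D.q⁻¹ • D.g (i+1) + (D.q⁻¹ - 1) • (1 : A[X])) = _
      rw [hDginv (i+1) (by omega), ih, htps, C_mul, C_mul, mul_assoc, mul_assoc (C (tp i)), hXC]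
      simp only [mul_assoc]
  have hCXpow : ∀ (a : A) (m : ℕ), (C a * X) ^ m = C (a ^ m) * X ^ m := by
    intro a m
    rw [(show Commute (C a) X from (hXC a).symm).mul_pow, C_pow]
  have hcoeff : ∀ m, ∀ f ∈ D.P m, ∀ d, f.coeff d ∈ Hsub F t tinv g ginv m := by
    intro m f hf
    induction hf using Algebra.adjoin_induction with
    | mem f hf =>
      intro d
      rcases hf with ⟨h, rfl⟩ | ⟨i, h1, h2, rfl⟩
      · change (C t * X).coeff d ∈ _
        rw [coeff_C_mul, coeff_X]
        split_ifs
        · rw [mul_one]; exact Algebra.subset_adjoin (Or.inl ⟨h, Or.inl rfl⟩)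
        · simp
      · change (C (g i)).coeff d ∈ _
        rw [coeff_C]
        split_ifs
        · exact Algebra.subset_adjoin (Or.inr ⟨i, h1, h2, Or.inl rfl⟩)
        · exact zero_mem _
    | algebraMap r =>
      intro d
      have : algebraMap K A[X] r = (r : F) • (1 : A[X]) := Algebra.algebraMap_eq_smul_one r
      rw [this, coeff_smul, coeff_one]
      refine Subalgebra.smul_mem _ ?_ _
      split_ifs
      · exact one_mem _
      · exact zero_mem _
    | add a b _ _ iha ihb => intro d; rw [coeff_add]; exact add_mem (iha d) (ihb d)
    | mul a b _ _ iha ihb =>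
      intro d
      rw [coeff_mul]
      exact sum_mem fun x _ => mul_mem (iha _) (ihb _)
  have hs0 : s 0 = 1 := by
    have := htrs 0 1 0 (one_mem _)
    simpa [zp, htr1] using this.symm
  have main : ∀ m, ∀ f ∈ D.P m, traceX tr f ∈ weightedSubalgebra K s := by
    intro m
    refine D.trace_mem (weightedSubalgebra K s) ((traceX tr).restrictScalars K) ⟨z, hzK⟩
      (fun k => C (s k) * X ^ k) ?_ ?_ ?_ ?_ ?_ m
    · intro k d
      rw [coeff_C_mul, coeff_X_pow]
      split_ifs with h
      · rw [h, mul_one]; exact s_mem_weightSpan K s hs0 k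
      · rw [mul_zero]; exact zero_mem _
    · ext d
      rw [LinearMap.restrictScalars_apply, coeff_traceX, coeff_one, coeff_one]
      split_ifs <;> simp [htr1]
    · intro a b
      ext d
      simp only [LinearMap.restrictScalars_apply, coeff_traceX, coeff_mul, map_sum]
      rw [← Finset.Nat.sum_antidiagonal_swap]
      exact Finset.sum_congr rfl fun x _ => htrc _ _
    · intro m hm a ha
      ext d
      change (traceX tr (a * C (g m))).coeff d = (z • traceX tr a).coeff d
      rw [coeff_traceX, coeff_mul_C, htrg m _ hm (hcoeff m a ha d), coeff_smul, coeff_traceX,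
        smul_eq_mul]
    · intro m k a ha
      ext d
      rw [LinearMap.restrictScalars_apply, LinearMap.restrictScalars_apply, hDtp, hCXpow,
        coeff_traceX, ← mul_assoc, coeff_mul_X_pow', mul_assoc, coeff_C_mul, coeff_X_pow_mul']
      split_ifs
      · rw [coeff_mul_C, coeff_traceX, ← htrs m _ k (hcoeff m a ha _)]
        simp [zp]
      · simp
  have hprod : ∀ m, (List.ofFn fun i : Fin m => D.tt (i.1+1) ^ kexp i.1).prod =
      C (List.ofFn fun i : Fin m => tt (i.1+1) ^ kexp i.1).prod *
        X ^ (∑ i ∈ Finset.range m, kexp i) := by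
    intro m
    induction m with
    | zero => simp
    | succ m ih =>
      rw [List.ofFn_succ', List.ofFn_succ', List.prod_concat, List.prod_concat,
        Finset.sum_range_succ, pow_add, C_mul]
      simp only [Fin.val_castSucc, Fin.val_last]
      rw [ih, hDtt, hCXpow]
      simp only [mul_assoc]
      rw [← mul_assoc (X ^ _), X_pow_mul_C, mul_assoc]
  have hword : ∀ y, C y ∈ D.P (n+2) →
      tr (t ^ p * (List.ofFn fun i : Fin (n+1) => tt (i.1+1) ^ kexp i.1).prod * y) ∈
        weightSpan K s (k + p) := by
    intro y hy
    have hmem : D.t ^ p * (List.ofFn fun i : Fin (n+1) => D.tt (i.1+1) ^ kexp i.1).prod * C y ∈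
        D.P (n+2) := by
      refine mul_mem (mul_mem (pow_mem (D.t_mem (by omega)) _) (list_prod_mem ?_)) hy
      intro x hx
      obtain ⟨i, rfl⟩ := (List.mem_ofFn' _ _).1 hx
      exact pow_mem (D.P_mono (by omega) (D.tt_mem _)) _
    have heq : D.t ^ p * (List.ofFn fun i : Fin (n+1) => D.tt (i.1+1) ^ kexp i.1).prod * C y =
        C (t ^ p * (List.ofFn fun i : Fin (n+1) => tt (i.1+1) ^ kexp i.1).prod * y) *
          X ^ (k + p) := by
      rw [hprod, hsum, show D.t = C t * X from rfl, hCXpow]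
      simp only [C_mul_X_pow_eq_monomial, monomial_mul_monomial, monomial_mul_C, add_comm p k]
    have h := main _ _ hmem (k + p)
    rwa [heq, coeff_traceX, coeff_C_mul_X_pow, if_pos rfl] at h
  have hfin : ∀ x ∈ weightSpan K s (k + p), ∃ (m : ℕ) (c : Fin m → F) (v : Fin m → ℕ)
      (u : Fin m → ℕ → ℕ), (∀ j, c j ∈ K) ∧
      (∀ j, ∑ i ∈ Finset.Icc 1 (v j), i * u j i = k + p) ∧
      x = ∑ j, c j * ∏ i ∈ Finset.Icc 1 (v j), s (i : ℤ) ^ u j i := by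
    intro x hx
    obtain ⟨m, c, f, rfl⟩ := Submodule.mem_span_set'.1 hx
    choose v u huv hf using fun j => (f j).2
    refine ⟨m, fun j => c j, v, u, fun j => (c j).2, huv, ?_⟩
    exact Finset.sum_congr rfl fun j _ => by rw [hf j]; rfl
  have hg1 : C (g 1) ∈ D.P (n+2) := D.g_mem le_rfl (by omega)
  refine ⟨hfin _ (hword _ hg1), hfin _ (hword _ ?_)⟩
  rw [← hDginv 1 le_rfl]
  exact add_mem (Subalgebra.smul_mem _ hg1 _) (Subalgebra.smul_mem _ (one_mem _) _)
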